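/- In the N-player (n,m)-Bingo game with fixed cards c_1,…,c_N, for every k with 1 ≤ k ≤ m·n the probability that the game ends exactly at the k-th call satisfies P(B_N = k) = Σ_{∅ ≠ Y ⊆ 𝓛_N} (−1)^{|Y|+1} · C(k−1, m(Y)−1) / C(m·n, m(Y)), where C(a,b) denotes the binomial coefficient. -/

import Mathlib

open Finset

/-- The row of an `n × n` Bingo board through index `i`. -/
def bingoRow (n : ℕ) (i : Fin n) : Finset (Fin n × Fin n) :=
  Finset.univ.filter (fun s => s.1 = i)

/-- The column of an `n × n` Bingo board through index `j`. -/
def bingoCol (n : ℕ) (j : Fin n) : Finset (Fin n × Fin n) :=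
  Finset.univ.filter (fun s => s.2 = j)

/-- The main diagonal `{(i,i)}`. -/
def bingoDiag (n : ℕ) : Finset (Fin n × Fin n) :=
  Finset.univ.filter (fun s => (s.2 : ℕ) = (s.1 : ℕ))

/-- The anti-diagonal `{(i, n-1-i)}`. -/
def bingoAntiDiag (n : ℕ) : Finset (Fin n × Fin n) :=
  Finset.univ.filter (fun s => (s.2 : ℕ) = n - 1 - (s.1 : ℕ))

/-- The set `𝓛` of winning lines: `n` rows, `n` columns and the two diagonals. -/
def bingoLines (n : ℕ) : Finset (Finset (Fin n × Fin n)) :=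
  (Finset.univ.image (bingoRow n)) ∪ (Finset.univ.image (bingoCol n)) ∪
    {bingoDiag n, bingoAntiDiag n}

/-- An `(n,m)`-Bingo card: an injective assignment of numbers such that column `j`
only uses numbers in `[m*j, m*(j+1))`. -/
def IsBingoCard (n m : ℕ) (c : Fin n × Fin n → Fin (m * n)) : Prop :=
  Function.Injective c ∧
    ∀ i j : Fin n, m * (j : ℕ) ≤ (c (i, j) : ℕ) ∧ (c (i, j) : ℕ) < m * ((j : ℕ) + 1)

/-- Bingo is achieved within the first `k` calls of `σ`: some winning line has all of its
numbers among `σ 0, …, σ (k-1)`. -/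
def BingoWins (n m : ℕ) (c : Fin n × Fin n → Fin (m * n))
    (σ : Equiv.Perm (Fin (m * n))) (k : ℕ) : Prop :=
  ∃ L ∈ bingoLines n, ∀ s ∈ L, ∃ t : Fin (m * n), (t : ℕ) < k ∧ σ t = c s

/-- `S_n = ∑_{∅ ≠ X ⊆ 𝓛} (-1)^{|X|+1} / (m(X)+1)`, where `m(X)` is the number of squares
covered by the union of the lines in `X`. -/
noncomputable def Sn (n : ℕ) : ℝ :=
  ∑ X ∈ (bingoLines n).powerset.filter (fun X => X.Nonempty),
    (-1 : ℝ) ^ (X.card + 1) / (((X.sup id).card : ℝ) + 1)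

/-- The set `𝓛_N` of distinct number-sets of winning lines across the `N` cards. -/
def bingoLinesN (n m N : ℕ) (c : Fin N → Fin n × Fin n → Fin (m * n)) :
    Finset (Finset (Fin (m * n))) :=
  ((Finset.univ : Finset (Fin N)) ×ˢ bingoLines n).image
    (fun q => q.2.image (c q.1))

/-- Some number-set in `𝓛_N` is contained among the first `k` calls of `σ`. -/
def BingoWinsN (n m N : ℕ) (c : Fin N → Fin n × Fin n → Fin (m * n))
    (σ : Equiv.Perm (Fin (m * n))) (k : ℕ) : Prop :=
  ∃ A ∈ bingoLinesN n m N c, ∀ x ∈ A, ∃ t : Fin (m * n), (t : ℕ) < k ∧ σ t = x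

/-- `S_{n,N}` for a fixed realization of the `N` cards. -/
noncomputable def SnN (n m N : ℕ) (c : Fin N → Fin n × Fin n → Fin (m * n)) : ℝ :=
  ∑ Y ∈ (bingoLinesN n m N c).powerset.filter (fun Y => Y.Nonempty),
    (-1 : ℝ) ^ (Y.card + 1) / (((Y.sup id).card : ℝ) + 1)

/-!
A set `T` of numbers lies among the first `k` of `M` calls with probability
`choose k #T / choose M #T`. As the first `k` calls increase with `k`, the game is over by call
`k` exactly when some winning set lies among the first `k` calls; inclusion–exclusion over the
winning sets gives `P(B ≤ k)`, and Pascal's rule turns `P(B ≤ k) - P(B ≤ k - 1)` into `P(B = k)`.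
-/

open Equiv
open scoped Pointwise Nat

section Perm

variable {α : Type*} [Fintype α] [DecidableEq α] {T T' : Finset α}

lemma card_filter_subset_perm_smul_congr (K : Finset α) (h : #T = #T') :
    #{σ : Perm α | T ⊆ σ • K} = #{σ : Perm α | T' ⊆ σ • K} := by
  obtain ⟨τ, hτ⟩ := Perm.exists_map_finset_eq T T' h
  obtain rfl : τ • T = T' := by rw [← hτ, map_eq_image]; rfl
  refine card_equiv (Equiv.mulLeft τ) fun σ ↦ ?_
  simp [mul_smul]

/-- Both sides count the pairs of a permutation `σ` and a subset of `σ • K` of size `#T`. -/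
lemma choose_card_mul_card_filter_subset_perm_smul (K T : Finset α) :
    (Fintype.card α).choose #T * #{σ : Perm α | T ⊆ σ • K} =
      (Fintype.card α)! * (#K).choose #T := by
  have card_subsets (σ : Perm α) :
      #{T' ∈ powersetCard #T univ | T' ⊆ σ • K} = (#K).choose #T := by
    rw [← card_smul_finset σ K, ← card_powersetCard]
    congr 1
    ext T'
    simp [mem_powersetCard, and_comm]
  calc (Fintype.card α).choose #T * #{σ : Perm α | T ⊆ σ • K}
    _ = ∑ T' ∈ powersetCard #T univ, #{σ : Perm α | T' ⊆ σ • K} := by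
      rw [sum_congr rfl fun T' hT' ↦
        card_filter_subset_perm_smul_congr K (mem_powersetCard.1 hT').2]
      simp
    _ = ∑ σ : Perm α, #{T' ∈ powersetCard #T univ | T' ⊆ σ • K} :=
      sum_card_bipartiteAbove_eq_sum_card_bipartiteBelow fun T' (σ : Perm α) ↦ T' ⊆ σ • K
    _ = (Fintype.card α)! * (#K).choose #T := by
      simp [card_subsets, Fintype.card_perm]

lemma card_filter_subset_perm_smul_div_factorial (K T : Finset α) :
    (#{σ : Perm α | T ⊆ σ • K} : ℝ) / (Fintype.card α)! =
      (#K).choose #T / (Fintype.card α).choose #T := by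
  have choose_ne_zero : ((Fintype.card α).choose #T : ℝ) ≠ 0 :=
    mod_cast (Nat.choose_pos (card_le_univ T)).ne'
  field_simp
  rw [mul_comm]
  exact_mod_cast choose_card_mul_card_filter_subset_perm_smul K T

end Perm

lemma card_filter_exists_subset {Ω α : Type*} [Fintype Ω] [DecidableEq α]
    (F : Ω → Finset α) (S : Finset (Finset α)) :
    (#{ω | ∃ A ∈ S, A ⊆ F ω} : ℤ) =
      ∑ Y ∈ S.powerset with Y.Nonempty, (-1) ^ (#Y + 1) * (#{ω | Y.sup id ⊆ F ω} : ℤ) := by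
  classical
  let containing (A : Finset α) : Finset Ω := {ω | A ⊆ F ω}
  have biUnion_eq : S.biUnion containing = ({ω | ∃ A ∈ S, A ⊆ F ω} : Finset Ω) := by
    ext; simp [containing]
  have inf'_eq (Y : Finset (Finset α)) (hY : Y.Nonempty) :
      Y.inf' hY containing = ({ω | Y.sup id ⊆ F ω} : Finset Ω) := by
    ext; simp [containing, mem_inf']
  rw [← biUnion_eq, inclusion_exclusion_card_biUnion, ← sum_coe_sort (S.powerset.filter _)]
  simp only [inf'_eq]

lemma cast_card_filter_eq_eq_sub {Ω R : Type*} [Fintype Ω] [AddGroupWithOne R]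
    (B : Ω → ℕ) {k : ℕ} (hk : 1 ≤ k) :
    (#{ω | B ω = k} : R) = #{ω | B ω ≤ k} - #{ω | B ω ≤ k - 1} := by
  classical
  have eq_sdiff : ({ω | B ω = k} : Finset Ω) =
      ({ω | B ω ≤ k} : Finset Ω) \ ({ω | B ω ≤ k - 1} : Finset Ω) := by
    ext ω
    simp only [mem_filter_univ, mem_sdiff]
    omega
  have subset : ({ω | B ω ≤ k - 1} : Finset Ω) ⊆ ({ω | B ω ≤ k} : Finset Ω) :=
    monotone_filter_right _ fun _ _ (h : _ ≤ _) ↦ h.trans (Nat.sub_le k 1)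
  rw [eq_sdiff, cast_card_sdiff subset]

section WaitingTime

variable {M : ℕ} {S : Finset (Finset (Fin M))} {B : Perm (Fin M) → ℕ} {k : ℕ}

/-- The set of the first `k` numbers called, when `σ` is the order of the calls. -/
def firstCalls (σ : Perm (Fin M)) (k : ℕ) : Finset (Fin M) :=
  σ • ({t | (t : ℕ) < k} : Finset (Fin M))

lemma mem_firstCalls {σ : Perm (Fin M)} {x : Fin M} :
    x ∈ firstCalls σ k ↔ ∃ t : Fin M, (t : ℕ) < k ∧ σ t = x := by
  simp [firstCalls, mem_smul_finset]

lemma firstCalls_mono (σ : Perm (Fin M)) : Monotone (firstCalls σ) := fun _ _ hkl _ hx ↦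
  have ⟨t, ht, hσt⟩ := mem_firstCalls.1 hx
  mem_firstCalls.2 ⟨t, ht.trans_le hkl, hσt⟩

lemma card_filter_subset_firstCalls_div_factorial (hk : k ≤ M) (T : Finset (Fin M)) :
    (#{σ : Perm (Fin M) | T ⊆ firstCalls σ k} : ℝ) / M ! = k.choose #T / M.choose #T := by
  have := card_filter_subset_perm_smul_div_factorial ({t | (t : ℕ) < k} : Finset (Fin M)) T
  rwa [Fin.card_filter_val_lt, min_eq_right hk, Fintype.card_fin] at this

/-- The numbers of calls after which some member of `S` has been called entirely, when `σ` is the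
order of the calls; the game with winning sets `S` ends at the least of them. -/
def completionTimes (S : Finset (Finset (Fin M))) (σ : Perm (Fin M)) : Set ℕ :=
  {k | ∃ A ∈ S, A ⊆ firstCalls σ k}

lemma isUpperSet_completionTimes (S : Finset (Finset (Fin M))) (σ : Perm (Fin M)) :
    IsUpperSet (completionTimes S σ) := fun _ _ hkl ⟨A, hA, hAk⟩ ↦
  ⟨A, hA, hAk.trans (firstCalls_mono σ hkl)⟩

lemma card_filter_le_div_factorial (hB : ∀ σ, IsLeast (completionTimes S σ) (B σ))
    (hk : k ≤ M) :
    (#{σ | B σ ≤ k} : ℝ) / M ! =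
      ∑ Y ∈ S.powerset with Y.Nonempty,
        (-1) ^ (#Y + 1) * (k.choose #(Y.sup id) : ℝ) / M.choose #(Y.sup id) := by
  have le_iff (σ : Perm (Fin M)) : B σ ≤ k ↔ ∃ A ∈ S, A ⊆ firstCalls σ k :=
    ⟨fun h ↦ isUpperSet_completionTimes S σ h (hB σ).1, fun h ↦ (hB σ).2 h⟩
  have inclusion_exclusion := congrArg (Int.cast (R := ℝ))
    (card_filter_exists_subset (fun σ : Perm (Fin M) ↦ firstCalls σ k) S)
  push_cast at inclusion_exclusion
  simp only [le_iff, inclusion_exclusion, sum_div, mul_div_assoc,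
    card_filter_subset_firstCalls_div_factorial hk]

theorem bingo_multiplayer_pmf_general (hS : ∀ A ∈ S, A.Nonempty)
    (hB : ∀ σ, IsLeast (completionTimes S σ) (B σ)) (hk1 : 1 ≤ k) (hk : k ≤ M) :
    (#{σ | B σ = k} : ℝ) / M ! =
      ∑ Y ∈ S.powerset with Y.Nonempty,
        (-1) ^ (#Y + 1) * ((k - 1).choose (#(Y.sup id) - 1) : ℝ) / M.choose #(Y.sup id) := by
  rw [cast_card_filter_eq_eq_sub B hk1, sub_div, card_filter_le_div_factorial hB hk,
    card_filter_le_div_factorial hB ((Nat.sub_le k 1).trans hk), ← sum_sub_distrib]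
  refine sum_congr rfl fun Y hY ↦ ?_
  obtain ⟨hYS, A, hA⟩ := mem_filter.1 hY
  have card_pos : 0 < #(Y.sup id) :=
    ((hS A (mem_powerset.1 hYS hA)).mono (le_sup (f := id) hA)).card_pos
  rw [Nat.choose_eq_choose_pred_add hk1 card_pos]
  push_cast
  ring

end WaitingTime

lemma nonempty_of_mem_bingoLines {n : ℕ} (hn : 1 ≤ n) {L : Finset (Fin n × Fin n)}
    (hL : L ∈ bingoLines n) : L.Nonempty := by
  simp only [bingoLines, mem_union, mem_image_univ_iff_mem_range, Set.mem_range, mem_insert,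
    mem_singleton] at hL
  rcases hL with (⟨i, rfl⟩ | ⟨j, rfl⟩) | (rfl | rfl)
  · exact ⟨(i, i), by simp [bingoRow]⟩
  · exact ⟨(j, j), by simp [bingoCol]⟩
  · exact ⟨(⟨0, hn⟩, ⟨0, hn⟩), by simp [bingoDiag]⟩
  · exact ⟨(⟨0, hn⟩, ⟨n - 1, by omega⟩), by simp [bingoAntiDiag]⟩

section Multiplayer

variable {n m N : ℕ} {c : Fin N → Fin n × Fin n → Fin (m * n)}

lemma nonempty_of_mem_bingoLinesN (hn : 1 ≤ n) {A : Finset (Fin (m * n))}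
    (hA : A ∈ bingoLinesN n m N c) : A.Nonempty := by
  obtain ⟨⟨a, L⟩, haL, rfl⟩ := mem_image.1 hA
  exact (nonempty_of_mem_bingoLines hn (mem_product.1 haL).2).image _

lemma bingoWinsN_iff_mem_completionTimes {σ : Perm (Fin (m * n))} {k : ℕ} :
    BingoWinsN n m N c σ k ↔ k ∈ completionTimes (bingoLinesN n m N c) σ := by
  simp only [BingoWinsN, completionTimes, Set.mem_ofPred_eq, subset_iff, mem_firstCalls]

lemma setOf_one_le_and_bingoWinsN (hn : 1 ≤ n) (c : Fin N → Fin n × Fin n → Fin (m * n))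
    (σ : Perm (Fin (m * n))) :
    {k | 1 ≤ k ∧ BingoWinsN n m N c σ k} = completionTimes (bingoLinesN n m N c) σ := by
  ext k
  rw [Set.mem_ofPred_eq, bingoWinsN_iff_mem_completionTimes, and_iff_right_iff_imp]
  rintro ⟨A, hA, hAk⟩
  obtain ⟨x, hx⟩ := nonempty_of_mem_bingoLinesN hn hA
  obtain ⟨t, ht, -⟩ := mem_firstCalls.1 (hAk hx)
  exact Nat.one_le_of_lt ht

end Multiplayer

/-- inclusion-exclusion formula for the PMF `P(B_N = k)` in the `N`-player
`(n,m)`-Bingo game with fixed cards. -/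
theorem bingo_multiplayer_pmf (n m N : ℕ) (hn : 1 ≤ n) (hm : n ≤ m) (hN : 1 ≤ N)
    (c : Fin N → Fin n × Fin n → Fin (m * n)) (hc : ∀ a, IsBingoCard n m (c a))
    (B : Equiv.Perm (Fin (m * n)) → ℕ)
    (hB : ∀ σ, IsLeast {k : ℕ | 1 ≤ k ∧ BingoWinsN n m N c σ k} (B σ))
    (k : ℕ) (hk1 : 1 ≤ k) (hk : k ≤ m * n) :
    (((Finset.univ : Finset (Equiv.Perm (Fin (m * n)))).filter
        (fun σ => B σ = k)).card : ℝ) / (Nat.factorial (m * n)) =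
      ∑ Y ∈ (bingoLinesN n m N c).powerset.filter (fun Y => Y.Nonempty),
        (-1 : ℝ) ^ (Y.card + 1) *
          (Nat.choose (k - 1) ((Y.sup id).card - 1) : ℝ) /
            (Nat.choose (m * n) ((Y.sup id).card) : ℝ) :=
  bingo_multiplayer_pmf_general (fun _ ↦ nonempty_of_mem_bingoLinesN hn)
    (fun σ ↦ setOf_one_le_and_bingoWinsN hn c σ ▸ hB σ) hk1 hk
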